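/- arXiv:1404.7098 — 2 statements merged into one kernel-verified Lean document; each statement's English description precedes it below -/
import Mathlib

section
/- Fix μ>0 and let U ⊆ ℝ⁴ be open. If φ:U→ℂ is smooth and satisfies □̃_μφ = 0 on U, then the function X ↦ (1+μ²N(X))^{1/2}·(d̃eg φ)(X) also satisfies □̃_μ((1+μ²N(X))^{1/2}·d̃eg φ) = 0 on U. -/
noncomputable section

/-- `N(X) = (x⁰)² + (x¹)² + (x²)² + (x³)²` for `X ∈ ℝ⁴`. -/
def Nq (X : Fin 4 → ℝ) : ℝ := ∑ i, X i ^ 2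

/-- The `i`-th standard basis vector of `ℝ⁴`. -/
def e4 (i : Fin 4) : Fin 4 → ℝ := Pi.single i 1

/-- The partial derivative `∂f/∂xⁱ` of a `ℂ`-valued function on `ℝ⁴`. -/
def pd (i : Fin 4) (f : (Fin 4 → ℝ) → ℂ) (X : Fin 4 → ℝ) : ℂ := fderiv ℝ f X (e4 i)

/-- The Laplacian `□f = Σᵢ ∂²f/∂(xⁱ)²`. -/
def lap (f : (Fin 4 → ℝ) → ℂ) (X : Fin 4 → ℝ) : ℂ := ∑ i, pd i (pd i f) X

/-- The degree operator `deg f = Σᵢ xⁱ ∂f/∂xⁱ`. -/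
def degOp (f : (Fin 4 → ℝ) → ℂ) (X : Fin 4 → ℝ) : ℂ := ∑ i, (X i : ℂ) * pd i f X

/-- `d̃eg f = f + deg f`. -/
def tdeg (f : (Fin 4 → ℝ) → ℂ) (X : Fin 4 → ℝ) : ℂ := f X + degOp f X

/-- The conformal Laplacian `□̃_μ f = □f + μ²(deg(deg f) + 3·deg f + 2f)`. -/
def boxTilde (μ : ℝ) (f : (Fin 4 → ℝ) → ℂ) (X : Fin 4 → ℝ) : ℂ :=
  lap f X + (μ ^ 2 : ℝ) * (degOp (degOp f) X + 3 * degOp f X + 2 * f X)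

section helpers

variable {U : Set (Fin 4 → ℝ)} {f g : (Fin 4 → ℝ) → ℂ} {X : Fin 4 → ℝ}

abbrev Sm (U : Set (Fin 4 → ℝ)) (f : (Fin 4 → ℝ) → ℂ) : Prop := ContDiffOn ℝ (⊤ : ℕ∞) f U

lemma Sm.da (hU : IsOpen U) (hf : Sm U f) (hX : X ∈ U) : DifferentiableAt ℝ f X :=
  (hf.contDiffAt (hU.mem_nhds hX)).differentiableAt (by simp)

lemma Sm.spd (hU : IsOpen U) (hf : Sm U f) (i : Fin 4) : Sm U (pd i f) := by
  have h : ContDiffOn ℝ (⊤ : ℕ∞) (fderiv ℝ f) U :=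
    ContDiffOn.fderiv_of_isOpen hf hU (by simp)
  exact h.clm_apply contDiffOn_const

lemma pd_congr (hU : IsOpen U) (h : ∀ Y ∈ U, f Y = g Y) (hX : X ∈ U) (i : Fin 4) :
    pd i f X = pd i g X := by
  have : f =ᶠ[nhds X] g := Filter.eventually_of_mem (hU.mem_nhds hX) h
  simp only [pd, this.fderiv_eq]

lemma pd_mul (hU : IsOpen U) (hf : Sm U f) (hg : Sm U g) (hX : X ∈ U) (i : Fin 4) :
    pd i (fun Y => f Y * g Y) X = f X * pd i g X + g X * pd i f X := by
  simp only [pd]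
  rw [fderiv_fun_mul (hf.da hU hX) (hg.da hU hX)]
  simp

lemma pd_add (hU : IsOpen U) (hf : Sm U f) (hg : Sm U g) (hX : X ∈ U) (i : Fin 4) :
    pd i (fun Y => f Y + g Y) X = pd i f X + pd i g X := by
  simp only [pd]
  rw [fderiv_fun_add (hf.da hU hX) (hg.da hU hX)]
  simp

lemma pd_const_mul (hU : IsOpen U) (hf : Sm U f) (hX : X ∈ U) (i : Fin 4) (c : ℂ) :
    pd i (fun Y => c * f Y) X = c * pd i f X := by
  simp only [pd]
  rw [fderiv_const_mul (hf.da hU hX)]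
  simp

lemma sm_coord (i : Fin 4) : Sm U (fun Y => (Y i : ℂ)) := by
  apply ContDiff.contDiffOn
  exact Complex.ofRealCLM.contDiff.comp (contDiff_apply ℝ ℝ i)

lemma pd_coord (i j : Fin 4) : pd j (fun Y => (Y i : ℂ)) X = if i = j then 1 else 0 := by
  have h : HasFDerivAt (fun Y : Fin 4 → ℝ => (Y i : ℂ))
      (Complex.ofRealCLM.comp (ContinuousLinearMap.proj (R := ℝ) (φ := fun _ : Fin 4 => ℝ) i)) X :=
    (Complex.ofRealCLM.comp
      (ContinuousLinearMap.proj (R := ℝ) (φ := fun _ : Fin 4 => ℝ) i)).hasFDerivAt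
  simp only [pd, h.fderiv]
  simp only [e4, ContinuousLinearMap.comp_apply, ContinuousLinearMap.proj_apply, Pi.single_apply]
  split_ifs <;> simp

lemma pd_comm (hU : IsOpen U) (hf : Sm U f) (hX : X ∈ U) (i j : Fin 4) :
    pd i (pd j f) X = pd j (pd i f) X := by
  have h : ContDiffOn ℝ (⊤ : ℕ∞) (fderiv ℝ f) U :=
    ContDiffOn.fderiv_of_isOpen hf hU (by simp)
  have hd : DifferentiableAt ℝ (fderiv ℝ f) X :=
    (h.contDiffAt (hU.mem_nhds hX)).differentiableAt (by simp)
  have key : ∀ i j, pd i (pd j f) X = fderiv ℝ (fderiv ℝ f) X (e4 i) (e4 j) := by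
    intro i j
    have : pd j f = fun Y => fderiv ℝ f Y (e4 j) := rfl
    rw [this, pd, fderiv_clm_apply hd (differentiableAt_const _)]
    simp
  have hs : IsSymmSndFDerivAt ℝ f X :=
    (hf.contDiffAt (hU.mem_nhds hX)).isSymmSndFDerivAt (by
      simp only [minSmoothness_of_isRCLikeNormedField]
      exact WithTop.coe_le_coe.2 (le_top : (2 : ℕ∞) ≤ ⊤))
  rw [key, key, hs.eq]

lemma Sm.sdeg (hU : IsOpen U) (hf : Sm U f) : Sm U (degOp f) :=
  ContDiffOn.sum (fun i _ => (sm_coord i).mul (hf.spd hU i))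

lemma pd_deg (hU : IsOpen U) (hf : Sm U f) (hX : X ∈ U) (j : Fin 4) :
    pd j (degOp f) X = pd j f X + ∑ i, (X i : ℂ) * pd i (pd j f) X := by
  have h1 : pd j (degOp f) X = ∑ i, pd j (fun Y => (Y i : ℂ) * pd i f Y) X := by
    have : degOp f = fun Y => ∑ i, (Y i : ℂ) * pd i f Y := rfl
    rw [this]
    simp only [pd]
    rw [fderiv_fun_sum]
    · simp
    · intro i _
      exact Sm.da hU ((sm_coord i).mul (hf.spd hU i)) hX
  rw [h1]
  simp_rw [pd_mul hU (sm_coord _) (hf.spd hU _) hX, pd_coord, pd_comm hU hf hX j]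
  rw [Finset.sum_add_distrib, add_comm]
  simp

lemma degOp_congr (hU : IsOpen U) (h : ∀ Y ∈ U, f Y = g Y) (hX : X ∈ U) :
    degOp f X = degOp g X := by
  simp only [degOp, pd_congr hU h hX]

lemma lap_congr (hU : IsOpen U) (h : ∀ Y ∈ U, f Y = g Y) (hX : X ∈ U) :
    lap f X = lap g X := by
  simp only [lap]
  exact Finset.sum_congr rfl fun i _ => pd_congr hU (fun Y hY => pd_congr hU h hY i) hX i

lemma degOp_mul (hU : IsOpen U) (hf : Sm U f) (hg : Sm U g) (hX : X ∈ U) :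
    degOp (fun Y => f Y * g Y) X = f X * degOp g X + g X * degOp f X := by
  simp only [degOp, pd_mul hU hf hg hX, Finset.mul_sum, ← Finset.sum_add_distrib]
  exact Finset.sum_congr rfl fun i _ => by ring

lemma degOp_add (hU : IsOpen U) (hf : Sm U f) (hg : Sm U g) (hX : X ∈ U) :
    degOp (fun Y => f Y + g Y) X = degOp f X + degOp g X := by
  simp only [degOp, pd_add hU hf hg hX, ← Finset.sum_add_distrib]
  exact Finset.sum_congr rfl fun i _ => by ring

lemma degOp_const_mul (hU : IsOpen U) (hf : Sm U f) (hX : X ∈ U) (c : ℂ) :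
    degOp (fun Y => c * f Y) X = c * degOp f X := by
  simp only [degOp, pd_const_mul hU hf hX, Finset.mul_sum]
  exact Finset.sum_congr rfl fun i _ => by ring

lemma lap_add (hU : IsOpen U) (hf : Sm U f) (hg : Sm U g) (hX : X ∈ U) :
    lap (fun Y => f Y + g Y) X = lap f X + lap g X := by
  simp only [lap, ← Finset.sum_add_distrib]
  refine Finset.sum_congr rfl fun i _ => ?_
  rw [pd_congr hU (fun Y hY => pd_add hU hf hg hY i) hX i, pd_add hU (hf.spd hU i) (hg.spd hU i) hX]

lemma lap_mul (hU : IsOpen U) (hf : Sm U f) (hg : Sm U g) (hX : X ∈ U) :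
    lap (fun Y => f Y * g Y) X = f X * lap g X + g X * lap f X + 2 * ∑ i, pd i f X * pd i g X := by
  simp only [lap, Finset.mul_sum, ← Finset.sum_add_distrib]
  refine Finset.sum_congr rfl fun i _ => ?_
  rw [pd_congr hU (fun Y hY => pd_mul hU hf hg hY i) hX i,
    pd_add hU (hf.mul (hg.spd hU i)) (hg.mul (hf.spd hU i)) hX,
    pd_mul hU hf (hg.spd hU i) hX, pd_mul hU hg (hf.spd hU i) hX]
  ring

lemma Sm.slap (hU : IsOpen U) (hf : Sm U f) : Sm U (lap f) :=
  ContDiffOn.sum (fun i _ => (hf.spd hU i).spd hU i)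

lemma pd_lap (hU : IsOpen U) (hf : Sm U f) (hX : X ∈ U) (j : Fin 4) :
    pd j (lap f) X = ∑ i, pd j (pd i (pd i f)) X := by
  have : lap f = fun Y => ∑ i, pd i (pd i f) Y := rfl
  rw [this, pd, fderiv_fun_sum]
  · simp [pd]
  · intro i _
    exact ((hf.spd hU i).spd hU i).da hU hX

lemma lap_deg (hU : IsOpen U) (hf : Sm U f) (hX : X ∈ U) :
    lap (degOp f) X = 2 * lap f X + degOp (lap f) X := by
  have h1 : ∀ j, pd j (pd j (degOp f)) X
      = 2 * pd j (pd j f) X + ∑ i, (X i : ℂ) * pd i (pd j (pd j f)) X := by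
    intro j
    have h2 : ∀ Y ∈ U, pd j (degOp f) Y = pd j f Y + degOp (pd j f) Y := fun Y hY =>
      pd_deg hU hf hY j
    rw [pd_congr hU h2 hX, pd_add hU (hf.spd hU j) ((hf.spd hU j).sdeg hU) hX,
      pd_deg hU (hf.spd hU j) hX]
    ring
  have h3 : degOp (lap f) X = ∑ j, ∑ i, (X i : ℂ) * pd i (pd j (pd j f)) X := by
    simp only [degOp, pd_lap hU hf hX, Finset.mul_sum]
    rw [Finset.sum_comm]
  rw [h3, lap, lap, Finset.mul_sum, ← Finset.sum_add_distrib]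
  exact Finset.sum_congr rfl fun j _ => h1 j

/-- the square-root factor -/
def rho (μ : ℝ) (Y : Fin 4 → ℝ) : ℂ := (Real.sqrt (1 + μ ^ 2 * Nq Y) : ℂ)

lemma s_pos (μ : ℝ) (Y : Fin 4 → ℝ) : 0 < 1 + μ ^ 2 * Nq Y := by
  have : 0 ≤ Nq Y := Finset.sum_nonneg fun i _ => sq_nonneg _
  positivity

lemma rho_ne (μ : ℝ) (Y : Fin 4 → ℝ) : rho μ Y ≠ 0 := by
  simp only [rho, ne_eq, Complex.ofReal_eq_zero]
  exact (Real.sqrt_pos.2 (s_pos μ Y)).ne'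

lemma rho_sq (μ : ℝ) (Y : Fin 4 → ℝ) :
    rho μ Y * rho μ Y = 1 + (μ : ℂ) ^ 2 * ∑ i, (Y i : ℂ) * (Y i : ℂ) := by
  simp only [rho]
  rw [← Complex.ofReal_mul, Real.mul_self_sqrt (s_pos μ Y).le]
  simp [Nq, sq]

lemma sm_rho (μ : ℝ) : Sm U (rho μ) := by
  apply ContDiff.contDiffOn
  have h : ContDiff ℝ (⊤ : ℕ∞) (fun Y : Fin 4 → ℝ => 1 + μ ^ 2 * Nq Y) := by
    unfold Nq; fun_prop
  exact Complex.ofRealCLM.contDiff.comp (h.sqrt fun Y => (s_pos μ Y).ne')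

lemma pd_rho (hU : IsOpen U) (hX : X ∈ U) (μ : ℝ) (i : Fin 4) :
    rho μ X * pd i (rho μ) X = (μ : ℂ) ^ 2 * X i := by
  have h1 := pd_mul hU (sm_rho (U := U) μ) (sm_rho μ) hX i
  have hc : ∀ j : Fin 4, Sm U (fun Y => (Y j : ℂ) * (Y j : ℂ)) := fun j =>
    (sm_coord j).mul (sm_coord j)
  have hs : Sm U (fun Y => ∑ j, (Y j : ℂ) * (Y j : ℂ)) := ContDiffOn.sum fun j _ => hc j
  have h2 : pd i (fun Y => ∑ j, (Y j : ℂ) * (Y j : ℂ)) X = 2 * X i := by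
    have : pd i (fun Y => ∑ j, (Y j : ℂ) * (Y j : ℂ)) X
        = ∑ j, pd i (fun Y => (Y j : ℂ) * (Y j : ℂ)) X := by
      simp only [pd]
      rw [fderiv_fun_sum fun j _ => (hc j).da hU hX]
      simp
    rw [this]
    simp_rw [pd_mul hU (sm_coord _) (sm_coord _) hX, pd_coord]
    rw [Finset.sum_add_distrib]
    simp
    ring
  rw [pd_congr hU (fun Y _ => rho_sq μ Y) hX, pd_add hU contDiffOn_const
    (contDiffOn_const.mul hs) hX, pd_const_mul hU hs hX, h2] at h1
  have h3 : pd i (fun _ => (1 : ℂ)) X = 0 := by simp [pd]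
  rw [h3] at h1
  linear_combination -h1 / 2

lemma deg_rho (hU : IsOpen U) (hX : X ∈ U) (μ : ℝ) :
    rho μ X * degOp (rho μ) X = rho μ X * rho μ X - 1 := by
  rw [rho_sq, degOp, Finset.mul_sum, Finset.mul_sum, add_sub_cancel_left]
  exact Finset.sum_congr rfl fun i _ => by linear_combination (X i : ℂ) * pd_rho hU hX μ i

lemma deg_deg_rho (hU : IsOpen U) (hX : X ∈ U) (μ : ℝ) :
    rho μ X * degOp (degOp (rho μ)) X + degOp (rho μ) X ^ 2 = 2 * rho μ X * degOp (rho μ) X := by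
  have hr := sm_rho (U := U) μ
  have h1 := degOp_mul hU hr (hr.sdeg hU) hX
  have h2 : ∀ Y ∈ U, rho μ Y * degOp (rho μ) Y = rho μ Y * rho μ Y + (-1) := fun Y hY => by
    rw [deg_rho hU hY]; ring
  rw [degOp_congr hU h2 hX, degOp_add hU (hr.mul hr) contDiffOn_const hX,
    degOp_mul hU hr hr hX] at h1
  have h3 : degOp (fun _ => (-1 : ℂ)) X = 0 := by simp [degOp, pd]
  rw [h3] at h1
  linear_combination -h1

lemma grad_rho (hU : IsOpen U) (hX : X ∈ U) (μ : ℝ) :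
    rho μ X * ∑ i, pd i (rho μ) X * pd i g X = (μ : ℂ) ^ 2 * degOp g X := by
  rw [degOp, Finset.mul_sum, Finset.mul_sum]
  exact Finset.sum_congr rfl fun i _ => by linear_combination pd i g X * pd_rho hU hX μ i

lemma lap_rho (hU : IsOpen U) (hX : X ∈ U) (μ : ℝ) :
    rho μ X ^ 2 * lap (rho μ) X + (μ : ℂ) ^ 2 * degOp (rho μ) X = 4 * (μ : ℂ) ^ 2 * rho μ X := by
  have hr := sm_rho (U := U) μ
  have h : ∀ i, rho μ X * pd i (pd i (rho μ)) X + pd i (rho μ) X * pd i (rho μ) X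
      = (μ : ℂ) ^ 2 := by
    intro i
    have h1 := pd_mul hU hr (hr.spd hU i) hX i
    rw [pd_congr hU (fun Y hY => pd_rho hU hY μ i) hX, pd_const_mul hU (sm_coord i) hX,
      pd_coord] at h1
    simp at h1
    linear_combination -h1
  have h4 : rho μ X * lap (rho μ) X + ∑ i, pd i (rho μ) X * pd i (rho μ) X = 4 * (μ : ℂ) ^ 2 := by
    rw [lap, Finset.mul_sum, ← Finset.sum_add_distrib, Finset.sum_congr rfl fun i _ => h i]
    simp
  have h5 := grad_rho (g := rho μ) hU hX μ
  linear_combination rho μ X * h4 - h5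

end helpers

/-- If `φ` is smooth on an open `U ⊆ ℝ⁴` and `□̃_μφ = 0` on `U`, then
`□̃_μ((1+μ²N(X))^{1/2}·d̃eg φ) = 0` on `U`. -/
theorem stmt4 (μ : ℝ) (hμ : 0 < μ) (U : Set (Fin 4 → ℝ)) (hU : IsOpen U)
    (φ : (Fin 4 → ℝ) → ℂ) (hφ : ContDiffOn ℝ (⊤ : ℕ∞) φ U)
    (hsol : ∀ X ∈ U, boxTilde μ φ X = 0) :
    ∀ X ∈ U,
      boxTilde μ (fun Y => (Real.sqrt (1 + μ ^ 2 * Nq Y) : ℂ) * tdeg φ Y) X = 0 := by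
  intro X hX
  have hf : Sm U φ := hφ
  have hd := hf.sdeg hU
  have hdd := hd.sdeg hU
  have ht : Sm U (tdeg φ) := hf.add hd
  have hr := sm_rho (U := U) μ
  change boxTilde μ (fun Y => rho μ Y * tdeg φ Y) X = 0
  have hl : ∀ Y ∈ U, lap φ Y
      = (-(μ : ℂ) ^ 2) * (degOp (degOp φ) Y + (3 * degOp φ Y + 2 * φ Y)) := by
    intro Y hY
    have := hsol Y hY
    simp only [boxTilde] at this
    push_cast at this
    linear_combination this
  have c3 : Sm U (fun Y => 3 * degOp φ Y) := contDiffOn_const.mul hd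
  have c2 : Sm U (fun Y => 2 * φ Y) := contDiffOn_const.mul hf
  have hdl : degOp (lap φ) X
      = (-(μ : ℂ) ^ 2) * (degOp (degOp (degOp φ)) X + (3 * degOp (degOp φ) X + 2 * degOp φ X)) := by
    rw [degOp_congr hU hl hX, degOp_const_mul hU (hdd.add (c3.add c2)) hX,
      degOp_add hU hdd (c3.add c2) hX, degOp_add hU c3 c2 hX, degOp_const_mul hU hd hX,
      degOp_const_mul hU hf hX]
  have hlt : lap (tdeg φ) X = 3 * lap φ X + degOp (lap φ) X := by
    have : lap (tdeg φ) X = lap φ X + lap (degOp φ) X := lap_add hU hf hd hX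
    rw [this, lap_deg hU hf hX]; ring
  have ht1 : ∀ Y ∈ U, degOp (tdeg φ) Y = degOp φ Y + degOp (degOp φ) Y := fun Y hY =>
    degOp_add hU hf hd hY
  have ht2 : degOp (degOp (tdeg φ)) X = degOp (degOp φ) X + degOp (degOp (degOp φ)) X := by
    rw [degOp_congr hU ht1 hX, degOp_add hU hd hdd hX]
  have hL : lap (tdeg φ) X = (-(μ : ℂ) ^ 2) *
      (degOp (degOp (tdeg φ)) X + 5 * degOp (tdeg φ) X + 6 * tdeg φ X) := by
    rw [hlt, hdl, hl X hX, ht2, ht1 X hX, tdeg]; ring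
  have hE : ∀ Y ∈ U, degOp (fun Y => rho μ Y * tdeg φ Y) Y
      = rho μ Y * degOp (tdeg φ) Y + tdeg φ Y * degOp (rho μ) Y := fun Y hY =>
    degOp_mul hU hr ht hY
  have hEE : degOp (degOp (fun Y => rho μ Y * tdeg φ Y)) X
      = rho μ X * degOp (degOp (tdeg φ)) X + 2 * degOp (rho μ) X * degOp (tdeg φ) X
        + tdeg φ X * degOp (degOp (rho μ)) X := by
    rw [degOp_congr hU hE hX, degOp_add hU (hr.mul (ht.sdeg hU)) (ht.mul (hr.sdeg hU)) hX,
      degOp_mul hU hr (ht.sdeg hU) hX, degOp_mul hU ht (hr.sdeg hU) hX]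
    ring
  rw [boxTilde, hEE, hE X hX, lap_mul hU hr ht hX, hL]
  have e1 := grad_rho (g := tdeg φ) hU hX μ
  have e2 := lap_rho hU hX μ
  have e3 := deg_deg_rho hU hX μ
  have e4 := deg_rho hU hX μ
  have hne := rho_ne μ X
  generalize (∑ i, pd i (rho μ) X * pd i (tdeg φ) X) = G at *
  generalize lap (rho μ) X = L at *
  generalize degOp (degOp (rho μ)) X = B at *
  generalize degOp (rho μ) X = A at *
  generalize degOp (degOp (tdeg φ)) X = P at *
  generalize degOp (tdeg φ) X = Q at *
  generalize tdeg φ X = T at *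
  generalize rho μ X = r at *
  push_cast
  have hA : A = (r * r - 1) / r := by field_simp; linear_combination e4
  subst hA
  have hG : G = (μ : ℂ) ^ 2 * Q / r := by field_simp; linear_combination e1
  have hLL : L = (4 * (μ : ℂ) ^ 2 * r - (μ : ℂ) ^ 2 * ((r * r - 1) / r)) / r ^ 2 := by
    rw [eq_div_iff (pow_ne_zero 2 hne)]; linear_combination e2
  have hB : B = (2 * r * ((r * r - 1) / r) - ((r * r - 1) / r) ^ 2) / r := by
    rw [eq_div_iff hne]; linear_combination e3
  rw [hG, hLL, hB]
  field_simp
  ring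
end
end

section
/- Fix μ>0, let l ∈ {0, 1/2, 1, 3/2, …} and m,n ∈ {−l, …, l}. Then on the domain where they are defined (ℝ⁴ for the + sign, ℝ⁴∖{0} for the − sign), d̃eg ( t^l_{n m̲}(X) / ((1+μ²N(X))^{1/2} ± 1)^{2l+1} ) = ±(2l+1) · t^l_{n m̲}(X) / ( (1+μ²N(X))^{1/2} · ((1+μ²N(X))^{1/2} ± 1)^{2l+1} ). -/
noncomputable section

/-- The matrix `Z(V) = [[v⁰−iv³, −iv¹−v²],[−iv¹+v², v⁰+iv³]]` with `det Z(V) = N(V)`. -/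
def Zmat (V : Fin 4 → ℂ) : Matrix (Fin 2) (Fin 2) ℂ :=
  !![V 0 - Complex.I * V 3, -Complex.I * V 1 - V 2;
     -Complex.I * V 1 + V 2, V 0 + Complex.I * V 3]

/-- The matrix coefficient `t^l_{n m̲}(Z)`: here `p = 2l`, `a = l−m`, `b = l−n`, and
`tcoef p a b Z` is the coefficient of `s^b` in `(s z₁₁+z₂₁)^a (s z₁₂+z₂₂)^{p−a}`. -/
def tcoef (p a b : ℕ) (Z : Matrix (Fin 2) (Fin 2) ℂ) : ℂ :=
  ((Polynomial.C (Z 0 0) * Polynomial.X + Polynomial.C (Z 1 0)) ^ a *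
   (Polynomial.C (Z 0 1) * Polynomial.X + Polynomial.C (Z 1 1)) ^ (p - a)).coeff b

/-- `t^l_{n m̲}(X)` for `X ∈ ℝ⁴`. -/
def tcoefR (p a b : ℕ) (X : Fin 4 → ℝ) : ℂ := tcoef p a b (Zmat fun i => (X i : ℂ))


theorem diff_coeff_mul {E : Type*} [NormedAddCommGroup E] [NormedSpace ℝ E]
    {P Q : E → Polynomial ℂ} (hP : ∀ k, Differentiable ℝ fun x => (P x).coeff k)
    (hQ : ∀ k, Differentiable ℝ fun x => (Q x).coeff k) (k : ℕ) :
    Differentiable ℝ fun x => (P x * Q x).coeff k := by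
  simp only [Polynomial.coeff_mul]
  exact Differentiable.fun_sum fun i _ => (hP i.1).mul (hQ i.2)

theorem diff_coeff_pow {E : Type*} [NormedAddCommGroup E] [NormedSpace ℝ E]
    {P : E → Polynomial ℂ} (hP : ∀ k, Differentiable ℝ fun x => (P x).coeff k)
    (n : ℕ) : ∀ k, Differentiable ℝ fun x => (P x ^ n).coeff k := by
  induction n with
  | zero => intro k; simp
  | succ n ih => intro k; simp only [pow_succ]; exact diff_coeff_mul ih hP k

theorem diff_coeff_lin {E : Type*} [NormedAddCommGroup E] [NormedSpace ℝ E]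
    {u v : E → ℂ} (hu : Differentiable ℝ u) (hv : Differentiable ℝ v) (k : ℕ) :
    Differentiable ℝ fun x =>
      (Polynomial.C (u x) * Polynomial.X + Polynomial.C (v x)).coeff k := by
  rcases k with _ | _ | k
  · simpa using hv
  · simpa [Polynomial.coeff_C] using hu
  · simp

theorem diff_coord (i : Fin 4) : Differentiable ℝ fun Y : Fin 4 → ℝ => ((Y i : ℝ) : ℂ) :=
  Complex.ofRealCLM.differentiable.comp (differentiable_apply i)

theorem tcoefR_diff (p a b : ℕ) : Differentiable ℝ (tcoefR p a b) := by
  unfold tcoefR tcoef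
  have h := diff_coord
  refine diff_coeff_mul (diff_coeff_pow (diff_coeff_lin ?_ ?_) a)
    (diff_coeff_pow (diff_coeff_lin ?_ ?_) (p - a)) b
  · simpa [Zmat] using (h 0).fun_sub ((h 3).const_mul Complex.I)
  · simpa [Zmat] using ((h 1).const_mul (-Complex.I)).fun_add (h 2)
  · simpa [Zmat] using ((h 1).const_mul (-Complex.I)).fun_sub (h 2)
  · simpa [Zmat] using (h 0).fun_add ((h 3).const_mul Complex.I)

theorem tcoefR_smul (p a b : ℕ) (ha : a ≤ p) (t : ℝ) (X : Fin 4 → ℝ) :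
    tcoefR p a b (t • X) = (t : ℂ) ^ p * tcoefR p a b X := by
  unfold tcoefR tcoef
  have hZ : ∀ i j, Zmat (fun i => (((t • X) i : ℝ) : ℂ)) i j
      = t * Zmat (fun i => ((X i : ℝ) : ℂ)) i j := by
    intro i j
    fin_cases i <;> fin_cases j <;> simp [Zmat] <;> ring
  simp only [hZ, Polynomial.C_mul, mul_assoc, ← mul_add, mul_pow]
  rw [mul_left_comm, ← mul_assoc (Polynomial.C (t : ℂ) ^ a), ← pow_add,
    Nat.add_sub_cancel' ha, mul_left_comm, ← Polynomial.C_pow, Polynomial.coeff_C_mul]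

theorem Nq_smul (t : ℝ) (X : Fin 4 → ℝ) : Nq (t • X) = t ^ 2 * Nq X := by
  simp [Nq, mul_pow, Finset.mul_sum]

theorem Nq_nonneg (X : Fin 4 → ℝ) : 0 ≤ Nq X := Finset.sum_nonneg fun _ _ => sq_nonneg _

theorem Nq_pos (X : Fin 4 → ℝ) (h : X ≠ 0) : 0 < Nq X := by
  obtain ⟨i, hi⟩ := Function.ne_iff.mp h
  exact Finset.sum_pos' (fun _ _ => sq_nonneg _) ⟨i, Finset.mem_univ _, by
    have : X i ≠ 0 := hi
    positivity⟩

theorem degOp_eq (f : (Fin 4 → ℝ) → ℂ) (X : Fin 4 → ℝ) : degOp f X = fderiv ℝ f X X := by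
  unfold degOp pd e4
  generalize fderiv ℝ f X = L
  conv_rhs => rw [pi_eq_sum_univ' X, map_sum]
  refine Finset.sum_congr rfl fun i _ => ?_
  rw [map_smul, Complex.real_smul]

theorem key (μ : ℝ) (p a b : ℕ) (ha : a ≤ p) (ε : ℝ) (hε : ε ^ 2 = 1) (X : Fin 4 → ℝ)
    (hX : Real.sqrt (1 + μ ^ 2 * Nq X) + ε ≠ 0) :
    tdeg (fun Y => tcoefR p a b Y /
          ((Real.sqrt (1 + μ ^ 2 * Nq Y) + ε : ℝ) : ℂ) ^ (p + 1)) X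
        = ε * (((p : ℂ) + 1) * tcoefR p a b X /
            ((Real.sqrt (1 + μ ^ 2 * Nq X) : ℝ) : ℂ) /
            ((Real.sqrt (1 + μ ^ 2 * Nq X) + ε : ℝ) : ℂ) ^ (p + 1)) := by
  have hpos : 0 < 1 + μ ^ 2 * Nq X := by have := Nq_nonneg X; positivity
  have hr : 0 < Real.sqrt (1 + μ ^ 2 * Nq X) := Real.sqrt_pos.2 hpos
  have hr2 : Real.sqrt (1 + μ ^ 2 * Nq X) ^ 2 = 1 + μ ^ 2 * Nq X := Real.sq_sqrt hpos.le
  have hN : Differentiable ℝ Nq := by unfold Nq; fun_prop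
  have hden : DifferentiableAt ℝ
      (fun Y : Fin 4 → ℝ => Real.sqrt (1 + μ ^ 2 * Nq Y) + ε) X :=
    (((hN X).const_mul _).const_add _ |>.sqrt hpos.ne').add_const _
  have hdenC : DifferentiableAt ℝ
      (fun Y : Fin 4 → ℝ => ((Real.sqrt (1 + μ ^ 2 * Nq Y) + ε : ℝ) : ℂ)) X :=
    Complex.ofRealCLM.differentiableAt.comp X hden
  have hXC : ((Real.sqrt (1 + μ ^ 2 * Nq X) + ε : ℝ) : ℂ) ≠ 0 := by exact_mod_cast hX
  have hf : DifferentiableAt ℝ (fun Y => tcoefR p a b Y /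
          ((Real.sqrt (1 + μ ^ 2 * Nq Y) + ε : ℝ) : ℂ) ^ (p + 1)) X := by
    have hA := tcoefR_diff p a b X
    have hB := hdenC.fun_pow (p + 1)
    have hne := pow_ne_zero (p + 1) hXC
    simp only [div_eq_mul_inv]
    exact hA.fun_mul (hB.fun_inv hne)
  unfold tdeg
  rw [degOp_eq]
  -- derivative along the ray
  have hray : HasDerivAt (fun t : ℝ => t • X) X 1 := by
    simpa using (hasDerivAt_id (1 : ℝ)).smul_const X
  have h1 := HasFDerivAt.comp_hasDerivAt_of_eq (1 : ℝ) hf.hasFDerivAt hray (by simp)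
  -- explicit derivative
  have hs : HasDerivAt (fun t : ℝ => Real.sqrt (1 + μ ^ 2 * (t ^ 2 * Nq X)) + ε)
      (μ ^ 2 * Nq X / Real.sqrt (1 + μ ^ 2 * Nq X)) 1 := by
    have h0 : HasDerivAt (fun t : ℝ => 1 + μ ^ 2 * (t ^ 2 * Nq X)) (μ ^ 2 * (2 * Nq X)) 1 := by
      simpa using (((hasDerivAt_pow 2 (1 : ℝ)).mul_const (Nq X)).const_mul (μ ^ 2)).const_add 1
    have := (h0.sqrt (by simpa using hpos.ne')).add_const ε
    simp only [one_pow, one_mul] at this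
    have e : μ ^ 2 * (2 * Nq X) / (2 * Real.sqrt (1 + μ ^ 2 * Nq X))
        = μ ^ 2 * Nq X / Real.sqrt (1 + μ ^ 2 * Nq X) := by
      field_simp
    rw [e] at this
    exact this
  have hsC := hs.ofReal_comp
  have hpw : HasDerivAt (fun t : ℝ => (t : ℂ) ^ p * tcoefR p a b X) (p * tcoefR p a b X) 1 := by
    have := ((hasDerivAt_id (1 : ℝ)).ofReal_comp.pow p).mul_const (tcoefR p a b X)
    simpa using this
  have h2 := hpw.div (hsC.pow (p + 1)) (pow_ne_zero _ (by simpa using hXC))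
  have h3 := h1.unique (h2.congr_of_eventuallyEq (Filter.Eventually.of_forall fun t => by
    simp [tcoefR_smul p a b ha, Nq_smul]))
  rw [h3]
  simp only [one_pow, one_mul, Complex.ofReal_one, Pi.pow_apply, add_tsub_cancel_right]
  have hq : (μ ^ 2 * Nq X : ℝ) = Real.sqrt (1 + μ ^ 2 * Nq X) ^ 2 - ε ^ 2 := by
    rw [hr2, hε]; ring
  have hq' : ((μ ^ 2 * Nq X / Real.sqrt (1 + μ ^ 2 * Nq X) : ℝ) : ℂ)
      = (Real.sqrt (1 + μ ^ 2 * Nq X) - ε) * ((Real.sqrt (1 + μ ^ 2 * Nq X) + ε : ℝ) : ℂ)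
        / Real.sqrt (1 + μ ^ 2 * Nq X) := by
    have hqC : ((μ ^ 2 * Nq X : ℝ) : ℂ)
        = ((Real.sqrt (1 + μ ^ 2 * Nq X) ^ 2 - ε ^ 2 : ℝ) : ℂ) := congrArg _ hq
    rw [Complex.ofReal_div, hqC]
    push_cast
    ring
  rw [hq']
  have hrC : ((Real.sqrt (1 + μ ^ 2 * Nq X) : ℝ) : ℂ) ≠ 0 := by exact_mod_cast hr.ne'
  have hε' : (ε : ℂ) = ((Real.sqrt (1 + μ ^ 2 * Nq X) + ε : ℝ) : ℂ)
      - ((Real.sqrt (1 + μ ^ 2 * Nq X) : ℝ) : ℂ) := by push_cast; ring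
  generalize hD : ((Real.sqrt (1 + μ ^ 2 * Nq X) + ε : ℝ) : ℂ) = D at *
  generalize ((Real.sqrt (1 + μ ^ 2 * Nq X) : ℝ) : ℂ) = r at *
  rw [hε']
  push_cast
  field_simp
  ring

/-- For `μ > 0`, `l` (encoded `p = 2l`) and `m,n ∈ {−l,…,l}` (encoded `a = l−m ≤ p`,
`b = l−n ≤ p`):
`d̃eg ( t^l_{n m̲}(X)/((1+μ²N(X))^{1/2} ± 1)^{2l+1} )
  = ±(2l+1) t^l_{n m̲}(X)/((1+μ²N(X))^{1/2}·((1+μ²N(X))^{1/2} ± 1)^{2l+1})`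
on `ℝ⁴` for the `+` sign, and on `ℝ⁴ ∖ {0}` for the `−` sign. -/
theorem stmt8 (μ : ℝ) (hμ : 0 < μ) (p a b : ℕ) (ha : a ≤ p) (hb : b ≤ p) :
    (∀ X : Fin 4 → ℝ,
      tdeg (fun Y => tcoefR p a b Y /
          ((Real.sqrt (1 + μ ^ 2 * Nq Y) + 1 : ℝ) : ℂ) ^ (p + 1)) X
        = ((p : ℂ) + 1) * tcoefR p a b X /
            ((Real.sqrt (1 + μ ^ 2 * Nq X) : ℝ) : ℂ) /
            ((Real.sqrt (1 + μ ^ 2 * Nq X) + 1 : ℝ) : ℂ) ^ (p + 1)) ∧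
    (∀ X : Fin 4 → ℝ, X ≠ 0 →
      tdeg (fun Y => tcoefR p a b Y /
          ((Real.sqrt (1 + μ ^ 2 * Nq Y) - 1 : ℝ) : ℂ) ^ (p + 1)) X
        = -(((p : ℂ) + 1) * tcoefR p a b X /
            ((Real.sqrt (1 + μ ^ 2 * Nq X) : ℝ) : ℂ) /
            ((Real.sqrt (1 + μ ^ 2 * Nq X) - 1 : ℝ) : ℂ) ^ (p + 1))) := by
  refine ⟨fun X => ?_, fun X hX => ?_⟩
  · have := key μ p a b ha 1 (by norm_num) X (by positivity)
    simpa only [Complex.ofReal_one, one_mul] using this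
  · have hN := Nq_pos X hX
    have h1 : 1 < Real.sqrt (1 + μ ^ 2 * Nq X) := by
      rw [Real.lt_sqrt (by norm_num)]
      have : 0 < μ ^ 2 * Nq X := by positivity
      linarith
    have := key μ p a b ha (-1) (by norm_num) X (by linarith)
    simpa only [Complex.ofReal_neg, Complex.ofReal_one, neg_mul, one_mul, ← sub_eq_add_neg]
      using this
end
end
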